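/- For every integer k ≥ 2 there exists a sequence (f_v)_{v ∈ ℕ}, where f_v is a k-uniform hypergraph property on v vertices, together with constants c, C > 0 and v₀ ∈ ℕ, such that c · v^{k/2} ≤ s(f_v) ≤ C · v^{k/2} for all v ≥ v₀; that is, s(f_v) = Θ(v^{k/2}) where the number of variables is n = C(v,k). -/

import Mathlib

open Finset

/-- The coordinate set: `k`-element subsets of `Fin v`. -/
abbrev KSet (v k : ℕ) : Type := {S : Finset (Fin v) // S.card = k}

/-- A `k`-uniform hypergraph on `Fin v`: a Boolean function on `k`-sets. -/
abbrev HGraph (v k : ℕ) : Type := KSet v k → Bool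

/-- Sensitivity of `f` at input `x`: the number of coordinates whose flip changes `f`. -/
def localSens {I : Type} [Fintype I] [DecidableEq I]
    (f : (I → Bool) → Bool) (x : I → Bool) : ℕ :=
  (Finset.univ.filter fun i => f (Function.update x i (!x i)) ≠ f x).card

/-- Sensitivity of `f`: maximum of `localSens f x` over all inputs `x`. -/
def sens {I : Type} [Fintype I] [DecidableEq I] (f : (I → Bool) → Bool) : ℕ :=
  Finset.univ.sup (localSens f)

/-- `sensOn b f` is `s^b(f)`: max sensitivity over inputs with `f x = b`. -/
def sensOn {I : Type} [Fintype I] [DecidableEq I] (b : Bool) (f : (I → Bool) → Bool) : ℕ :=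
  (Finset.univ.filter fun x => f x = b).sup (localSens f)

/-- Flip all the coordinates of `x` in the block `B`. -/
def flipBlock {I : Type} [DecidableEq I] (x : I → Bool) (B : Finset I) : I → Bool :=
  fun i => if i ∈ B then !x i else x i

/-- Block sensitivity of `f` at `x`: maximum number of pairwise disjoint sensitive blocks. -/
noncomputable def localBlockSens {I : Type} [Fintype I] [DecidableEq I]
    (f : (I → Bool) → Bool) (x : I → Bool) : ℕ :=
  sSup {n : ℕ | ∃ B : Fin n → Finset I,
    (∀ j, f (flipBlock x (B j)) ≠ f x) ∧
    ∀ j j', j ≠ j' → Disjoint (B j) (B j')}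

/-- Block sensitivity of `f`. -/
noncomputable def blockSens {I : Type} [Fintype I] [DecidableEq I]
    (f : (I → Bool) → Bool) : ℕ :=
  Finset.univ.sup (localBlockSens f)

/-- Image of a `k`-set under a permutation of the vertices. -/
def permKSet {v k : ℕ} (σ : Equiv.Perm (Fin v)) (S : KSet v k) : KSet v k :=
  ⟨S.1.map σ.toEmbedding, by rw [Finset.card_map]; exact S.2⟩

/-- A `k`-uniform hypergraph property: invariance under all vertex permutations,
where `(σ • G) S = G (σ⁻¹ S)`. -/
def IsHypergraphProperty {v k : ℕ} (f : HGraph v k → Bool) : Prop :=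
  ∀ (σ : Equiv.Perm (Fin v)) (G : HGraph v k),
    f (fun S => G (permKSet σ⁻¹ S)) = f G

/-- `A` spans a clique of `G`, and no edge of `G` meets `A` in all but one of its vertices. -/
def IsIsolatedClique {v k : ℕ} (G : HGraph v k) (A : Finset (Fin v)) : Prop :=
  ∀ S : KSet v k, (S.1 ⊆ A → G S = true) ∧ ((S.1 ∩ A).card + 1 = k → G S = false)

open Classical in
/-- The property of containing an isolated clique on exactly `a` vertices. -/
noncomputable def hasIsolatedClique (v k a : ℕ) (G : HGraph v k) : Bool :=
  decide (∃ A : Finset (Fin v), A.card = a ∧ IsIsolatedClique G A)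

lemma hasIsolatedClique_iff {v k a : ℕ} {G : HGraph v k} :
    hasIsolatedClique v k a G = true ↔
      ∃ A : Finset (Fin v), A.card = a ∧ IsIsolatedClique G A := by
  simp [hasIsolatedClique]

lemma hasIsolatedClique_of_perm {v k a : ℕ} (σ : Equiv.Perm (Fin v)) {G : HGraph v k}
    (h : hasIsolatedClique v k a G = true) :
    hasIsolatedClique v k a (fun S => G (permKSet σ⁻¹ S)) = true := by
  obtain ⟨A, hA, hG⟩ := hasIsolatedClique_iff.1 h
  have key : ∀ S : KSet v k,
      (permKSet σ⁻¹ S).1 = S.1.map (σ⁻¹ : Equiv.Perm (Fin v)).toEmbedding := fun S => rfl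
  have hB : A = (A.map σ.toEmbedding).map (σ⁻¹ : Equiv.Perm (Fin v)).toEmbedding := by
    ext x
    simp only [mem_map_equiv]
    change x ∈ A ↔ σ.symm (σ x) ∈ A
    rw [Equiv.symm_apply_apply]
  refine hasIsolatedClique_iff.2 ⟨A.map σ.toEmbedding, by simpa using hA, fun S => ⟨?_, ?_⟩⟩
  · intro hS
    refine (hG _).1 ?_
    rw [key, hB]
    exact Finset.map_subset_map.2 hS
  · intro hS
    refine (hG _).2 ?_
    rw [key, hB, ← Finset.map_inter, Finset.card_map]
    exact hS

lemma isHypergraphProperty_hasIsolatedClique (v k a : ℕ) :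
    IsHypergraphProperty (hasIsolatedClique v k a) := by
  intro σ G
  rw [Bool.eq_iff_iff]
  refine ⟨fun h => ?_, hasIsolatedClique_of_perm σ⟩
  have h' := hasIsolatedClique_of_perm σ⁻¹ h
  have : (fun S : KSet v k => G (permKSet σ⁻¹ (permKSet σ⁻¹⁻¹ S))) = G := by
    funext S
    congr 1
    apply Subtype.ext
    ext x
    simp only [permKSet, mem_map_equiv]
    change σ.symm (σ x) ∈ S.1 ↔ x ∈ S.1
    rw [Equiv.symm_apply_apply]
  simpa only [this] using h'

/-- A set of `k` vertices together with a further vertex `y` spans two `k`-sets through `y`. -/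
lemma exists_two_kSets_through {v k : ℕ} (hk : 2 ≤ k) {W : Finset (Fin v)} (hW : W.card = k)
    {y : Fin v} (hy : y ∉ W) :
    ∃ S₁ S₂ : KSet v k, S₁ ≠ S₂ ∧ (∃ w ∈ W, S₁.1 = insert y (W.erase w)) ∧
      ∃ w ∈ W, S₂.1 = insert y (W.erase w) := by
  have card : ∀ w ∈ W, (insert y (W.erase w)).card = k := by
    intro w hw
    rw [card_insert_of_notMem (fun h => hy (mem_of_mem_erase h)), card_erase_of_mem hw]
    omega
  obtain ⟨w₁, hw₁, w₂, hw₂, hne⟩ := one_lt_card.1 (by omega : 1 < W.card)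
  refine ⟨⟨_, card w₁ hw₁⟩, ⟨_, card w₂ hw₂⟩, ?_, ⟨w₁, hw₁, rfl⟩, ⟨w₂, hw₂, rfl⟩⟩
  intro h
  have h' : w₂ ∈ insert y (W.erase w₂) := by
    rw [← show insert y (W.erase w₁) = insert y (W.erase w₂) from Subtype.ext_iff.1 h]
    exact mem_insert_of_mem (mem_erase.2 ⟨hne.symm, hw₂⟩)
  rcases mem_insert.1 h' with h' | h'
  · exact hy (h' ▸ hw₂)
  · exact absurd h' (notMem_erase _ _)

lemma exists_two_kSets_almost_in_inter {v k : ℕ} (hk : 2 ≤ k) {A B : Finset (Fin v)}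
    (hA : k + 1 ≤ A.card) (hAB : k ≤ (A ∩ B).card + 1) (hne : ¬ A ⊆ B) :
    ∃ S₁ S₂ : KSet v k, S₁ ≠ S₂ ∧ (S₁.1 ⊆ A ∧ (S₁.1 ∩ B).card + 1 = k) ∧
      S₂.1 ⊆ A ∧ (S₂.1 ∩ B).card + 1 = k := by
  have good : ∀ y ∈ A, y ∉ B → ∀ T ⊆ A ∩ B, T.card + 1 = k →
      insert y T ⊆ A ∧ (insert y T ∩ B).card + 1 = k := by
    intro y hyA hyB T hT hcard
    refine ⟨insert_subset hyA (hT.trans inter_subset_left), ?_⟩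
    rw [insert_inter_of_notMem hyB, inter_eq_left.2 (hT.trans inter_subset_right), hcard]
  by_cases ht : k ≤ (A ∩ B).card
  · obtain ⟨y, hyA, hyB⟩ := not_subset.1 hne
    obtain ⟨W, hW, hWk⟩ := exists_subset_card_eq ht
    obtain ⟨S₁, S₂, hS, ⟨w₁, hw₁, h₁⟩, ⟨w₂, hw₂, h₂⟩⟩ := exists_two_kSets_through hk hWk
      (fun h => hyB (mem_of_mem_inter_right (hW h)))
    refine ⟨S₁, S₂, hS, ?_, ?_⟩
    · rw [h₁]
      exact good y hyA hyB _ ((erase_subset _ _).trans hW) (by rw [card_erase_of_mem hw₁]; omega)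
    · rw [h₂]
      exact good y hyA hyB _ ((erase_subset _ _).trans hW) (by rw [card_erase_of_mem hw₂]; omega)
  · have hsd : 1 < (A \ B).card := by
      have := card_sdiff_add_card_inter A B
      omega
    obtain ⟨y, hy, z, hz, hyz⟩ := one_lt_card.1 hsd
    rw [mem_sdiff] at hy hz
    have hc : (A ∩ B).card + 1 = k := by omega
    have hcard : ∀ x, x ∉ B → (insert x (A ∩ B)).card = k := by
      intro x hx
      rw [card_insert_of_notMem (fun h => hx (mem_of_mem_inter_right h)), hc]
    refine ⟨⟨_, hcard y hy.2⟩, ⟨_, hcard z hz.2⟩, ?_, good y hy.1 hy.2 _ subset_rfl hc,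
      good z hz.1 hz.2 _ subset_rfl hc⟩
    intro h
    have h' : y ∈ insert z (A ∩ B) := by
      rw [← show insert y (A ∩ B) = insert z (A ∩ B) from Subtype.ext_iff.1 h]
      exact mem_insert_self _ _
    rcases mem_insert.1 h' with h' | h'
    · exact hyz h'
    · exact hy.2 (mem_of_mem_inter_right h')

/-- Isolated cliques of two hypergraphs that differ in at most two `k`-sets are nearly disjoint. -/
lemma card_inter_lt_of_isIsolatedClique {v k : ℕ} (hk : 2 ≤ k) {A B : Finset (Fin v)}
    (hA : k + 1 ≤ A.card) (hAB : A.card = B.card) (hne : A ≠ B) {G H : HGraph v k}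
    {i j : KSet v k} (hGH : ∀ S, S ≠ i → S ≠ j → G S = H S)
    (hG : IsIsolatedClique G A) (hH : IsIsolatedClique H B) : (A ∩ B).card + 1 < k := by
  by_contra! hcon
  have hAnB : ¬ A ⊆ B := fun h => hne (eq_of_subset_of_card_le h hAB.ge)
  have hBnA : ¬ B ⊆ A := fun h => hne (eq_of_subset_of_card_le h hAB.le).symm
  obtain ⟨S₁, S₂, hS, ⟨h₁, h₁'⟩, h₂, h₂'⟩ := exists_two_kSets_almost_in_inter hk hA hcon hAnB
  obtain ⟨T, -, -, ⟨hT, hT'⟩, -⟩ := exists_two_kSets_almost_in_inter hk (hAB ▸ hA)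
    (by rwa [inter_comm]) hBnA
  have g₁ := (hG S₁).1 h₁
  have g₂ := (hG S₂).1 h₂
  have g₃ := (hG T).2 hT'
  have e₁ := (hH S₁).2 h₁'
  have e₂ := (hH S₂).2 h₂'
  have e₃ := (hH T).1 hT
  have hmem : ∀ S, G S ≠ H S → S = i ∨ S = j := fun S hS => by
    by_contra! h
    exact hS (hGH S h.1 h.2)
  have hT₁ : S₁ ≠ T := by
    rintro rfl
    simp [g₁] at g₃
  have hT₂ : S₂ ≠ T := by
    rintro rfl
    simp [g₂] at g₃
  rcases hmem S₁ (by simp [g₁, e₁]) with c₁ | c₁ <;>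
    rcases hmem S₂ (by simp [g₂, e₂]) with c₂ | c₂ <;>
    rcases hmem T (by simp [g₃, e₃]) with c₃ | c₃ <;>
    simp_all only [ne_eq, not_true_eq_false]

lemma isIsolatedClique_congr {v k : ℕ} {A : Finset (Fin v)} {G H : HGraph v k}
    (h : ∀ S : KSet v k, k ≤ (S.1 ∩ A).card + 1 → G S = H S) (hG : IsIsolatedClique G A) :
    IsIsolatedClique H A := by
  refine fun S => ⟨fun hS => ?_, fun hS => ?_⟩
  · rw [← h S (by rw [inter_eq_left.2 hS, S.2]; omega)]
    exact (hG S).1 hS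
  · rw [← h S hS.ge]
    exact (hG S).2 hS

/-- Flipping a `k`-set that meets an isolated clique in at least `k - 1` vertices destroys it. -/
lemma not_isIsolatedClique_flip {v k : ℕ} {A : Finset (Fin v)} {G : HGraph v k} {S : KSet v k}
    (hS : k ≤ (S.1 ∩ A).card + 1) (hG : IsIsolatedClique G A) :
    ¬ IsIsolatedClique (Function.update G S (!G S)) A := by
  intro h
  have hle : (S.1 ∩ A).card ≤ k := (card_le_card inter_subset_left).trans_eq S.2
  rcases hS.eq_or_lt with hS | hS
  · have h₁ := (h S).2 hS.symm
    have h₂ := (hG S).2 hS.symm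
    simp [h₂] at h₁
  · have hsub : S.1 ⊆ A := inter_eq_left.1 (eq_of_subset_of_card_le inter_subset_left
      (by rw [S.2]; omega))
    have h₁ := (h S).1 hsub
    have h₂ := (hG S).1 hsub
    simp [h₂] at h₁

lemma card_kSets_near_le (v k : ℕ) (hk : 1 ≤ k) (A : Finset (Fin v)) :
    (univ.filter fun S : KSet v k => k ≤ (S.1 ∩ A).card + 1).card ≤ A.card ^ (k - 1) * v := by
  have hle : (univ.filter fun S : KSet v k => k ≤ (S.1 ∩ A).card + 1).card ≤
      (A.powersetCard (k - 1) ×ˢ (univ : Finset (Fin v))).card := by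
    refine (card_le_card_of_surjOn (t := (univ.filter fun S : KSet v k =>
      k ≤ (S.1 ∩ A).card + 1).map (Function.Embedding.subtype _))
      (fun p : Finset (Fin v) × Fin v => insert p.2 p.1) ?_).trans' (by rw [card_map])
    rintro S hS
    simp only [coe_map, Function.Embedding.subtype_apply, Set.mem_image, mem_coe, mem_filter,
      mem_univ, true_and] at hS
    obtain ⟨S, hS, rfl⟩ := hS
    obtain ⟨T, hT, hTc⟩ := exists_subset_card_eq (by omega : k - 1 ≤ (S.1 ∩ A).card)
    have hTS : T ⊆ S.1 := hT.trans inter_subset_left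
    have hd : (S.1 \ T).card = 1 := by
      rw [card_sdiff_of_subset hTS, hTc, S.2]
      omega
    obtain ⟨y, hy⟩ := card_eq_one.1 hd
    refine ⟨(T, y), ?_, ?_⟩
    · simp [mem_powersetCard, hT.trans inter_subset_right, hTc]
    · change insert y T = S.1
      rw [insert_eq, ← hy, sdiff_union_of_subset hTS]
  refine hle.trans ?_
  rw [card_product, card_powersetCard, card_univ, Fintype.card_fin]
  exact Nat.mul_le_mul_right _ (Nat.choose_le_pow _ _)

lemma le_card_kSets_near {v k : ℕ} (hk : 1 ≤ k) (A : Finset (Fin v)) :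
    A.card.choose (k - 1) * (v - A.card) ≤
      (univ.filter fun S : KSet v k => k ≤ (S.1 ∩ A).card + 1).card := by
  have hcard : A.card.choose (k - 1) * (v - A.card) = (A.powersetCard (k - 1) ×ˢ Aᶜ).card := by
    rw [card_product, card_powersetCard, card_compl, Fintype.card_fin]
  rw [hcard, ← card_map (Function.Embedding.subtype _)]
  refine card_le_card_of_injOn (fun p : Finset (Fin v) × Fin v => insert p.2 p.1) ?_ ?_
  · rintro ⟨T, y⟩ h
    simp only [coe_product, Set.mem_prod, mem_coe, mem_powersetCard, mem_compl] at h
    obtain ⟨⟨hT, hTc⟩, hy⟩ := h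
    have hc : (insert y T).card = k := by
      rw [card_insert_of_notMem (fun h => hy (hT h)), hTc]
      omega
    refine mem_map.2 ⟨⟨insert y T, hc⟩, ?_, rfl⟩
    simp only [mem_filter, mem_univ, true_and]
    rw [insert_inter_of_notMem hy, inter_eq_left.2 hT, hTc]
    omega
  · rintro ⟨T, y⟩ h ⟨T', y'⟩ h' heq
    simp only [coe_product, Set.mem_prod, mem_coe, mem_powersetCard, mem_compl] at h h' heq
    have hT : T = insert y T ∩ A := by
      rw [insert_inter_of_notMem h.2, inter_eq_left.2 h.1.1]
    have hT' : T' = insert y' T' ∩ A := by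
      rw [insert_inter_of_notMem h'.2, inter_eq_left.2 h'.1.1]
    have hTT : T = T' := by rw [hT, hT', heq]
    subst hTT
    have hy : y ∈ insert y' T := heq ▸ mem_insert_self _ _
    rcases mem_insert.1 hy with hy | hy
    · rw [hy]
    · exact absurd (h.1.1 hy) h.2

/-- Sets of size `a` that pairwise share fewer than `r` points have disjoint families of
`r`-subsets. -/
lemma card_mul_choose_le_of_inter_lt {ι : Type*} {v a r : ℕ} (s : Finset ι)
    (A : ι → Finset (Fin v)) (hA : ∀ i ∈ s, (A i).card = a)
    (h : ∀ i ∈ s, ∀ j ∈ s, i ≠ j → (A i ∩ A j).card < r) :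
    s.card * a.choose r ≤ v.choose r := by
  have hdisj : (s : Set ι).PairwiseDisjoint fun i => (A i).powersetCard r := by
    intro i hi j hj hij
    refine disjoint_left.2 fun T hT hT' => ?_
    rw [mem_powersetCard] at hT hT'
    have := card_le_card (subset_inter hT.1 hT'.1)
    have := h i hi j hj hij
    omega
  have hsum : s.card * a.choose r = (s.biUnion fun i => (A i).powersetCard r).card := by
    rw [card_biUnion hdisj, sum_congr rfl (fun i hi => by rw [card_powersetCard, hA i hi]),
      sum_const, smul_eq_mul]
  have hv : v.choose r = ((univ : Finset (Fin v)).powersetCard r).card := by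
    rw [card_powersetCard, card_univ, Fintype.card_fin]
  rw [hsum, hv]
  refine card_le_card fun T hT => ?_
  obtain ⟨i, -, hi⟩ := mem_biUnion.1 hT
  exact mem_powersetCard.2 ⟨subset_univ _, (mem_powersetCard.1 hi).2⟩

lemma localSens_le_of_eq_true {v k a : ℕ} (hk : 1 ≤ k) {G : HGraph v k}
    (hG : hasIsolatedClique v k a G = true) :
    localSens (hasIsolatedClique v k a) G ≤ a ^ (k - 1) * v := by
  obtain ⟨A, rfl, hA⟩ := hasIsolatedClique_iff.1 hG
  refine (card_le_card ?_).trans (card_kSets_near_le v k hk A)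
  intro S hS
  simp only [mem_filter, mem_univ, true_and] at hS ⊢
  by_contra hfar
  refine hS ?_
  rw [hG, hasIsolatedClique_iff]
  refine ⟨A, rfl, isIsolatedClique_congr (fun T hT => ?_) hA⟩
  rw [Function.update_of_ne]
  rintro rfl
  exact hfar hT

lemma localSens_mul_choose_le_of_eq_false {v k a : ℕ} (hk : 2 ≤ k) (ha : k + 1 ≤ a)
    {G : HGraph v k} (hG : hasIsolatedClique v k a G = false) :
    localSens (hasIsolatedClique v k a) G * a.choose (k - 1) ≤ v.choose (k - 1) := by
  have hex : ∀ S : KSet v k, ∃ A : Finset (Fin v),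
      hasIsolatedClique v k a (Function.update G S (!G S)) ≠ hasIsolatedClique v k a G →
        A.card = a ∧ IsIsolatedClique (Function.update G S (!G S)) A := by
    intro S
    by_cases h : hasIsolatedClique v k a (Function.update G S (!G S)) = true
    · obtain ⟨A, hA⟩ := hasIsolatedClique_iff.1 h
      exact ⟨A, fun _ => hA⟩
    · exact ⟨∅, fun h' => absurd (by rw [hG]; simpa using h) h'⟩
  choose A hA using hex
  refine card_mul_choose_le_of_inter_lt _ A (fun S hS => (hA S (mem_filter.1 hS).2).1) ?_
  intro S hS T hT hST
  obtain ⟨hScard, hSA⟩ := hA S (mem_filter.1 hS).2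
  obtain ⟨hTcard, hTA⟩ := hA T (mem_filter.1 hT).2
  have hGA : ∀ B : Finset (Fin v), B.card = a → ¬ IsIsolatedClique G B := by
    intro B hB hGB
    have := hasIsolatedClique_iff.2 ⟨B, hB, hGB⟩
    simp [hG] at this
  have hne : A S ≠ A T := by
    intro heq
    refine hGA _ hScard fun U => ?_
    have h₁ := hSA U
    have h₂ := hTA U
    rw [← heq] at h₂
    by_cases hU : U = S
    · rwa [Function.update_of_ne (hU ▸ hST)] at h₂
    · rwa [Function.update_of_ne hU] at h₁
  have := card_inter_lt_of_isIsolatedClique hk (hScard ▸ ha) (hScard.trans hTcard.symm) hne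
    (i := S) (j := T)
    (fun U hU hU' => by rw [Function.update_of_ne hU, Function.update_of_ne hU']) hSA hTA
  omega

lemma choose_mul_le_sens {v k a : ℕ} (hk : 2 ≤ k) (ha : k + 1 ≤ a) (hav : a ≤ v) :
    a.choose (k - 1) * (v - a) ≤ sens (hasIsolatedClique v k a) := by
  obtain ⟨A, -, rfl⟩ := exists_subset_card_eq
    (by rwa [card_univ, Fintype.card_fin] : a ≤ (univ : Finset (Fin v)).card)
  let G : HGraph v k := fun S => decide (S.1 ⊆ A)
  have hGA : IsIsolatedClique G A := by
    refine fun S => ⟨fun h => by simpa [G] using h, fun h => ?_⟩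
    have : ¬ S.1 ⊆ A := by
      intro hS
      rw [inter_eq_left.2 hS, S.2] at h
      omega
    simpa [G] using this
  refine le_trans ?_ (le_sup (f := localSens (hasIsolatedClique v k A.card)) (mem_univ G))
  refine (le_card_kSets_near (by omega) A).trans (card_le_card fun S hS => ?_)
  simp only [mem_filter, mem_univ, true_and] at hS ⊢
  rw [hasIsolatedClique_iff.2 ⟨A, rfl, hGA⟩, Ne, hasIsolatedClique_iff]
  rintro ⟨B, hBA, hB⟩
  by_cases hsub : B ⊆ A
  · rw [eq_of_subset_of_card_le hsub hBA.ge] at hB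
    exact not_isIsolatedClique_flip hS hGA hB
  · obtain ⟨y, hyB, hyA⟩ := not_subset.1 hsub
    obtain ⟨W, hW, hWk⟩ := exists_subset_card_eq
      (by rw [card_erase_of_mem hyB]; omega : k ≤ (B.erase y).card)
    obtain ⟨S₁, S₂, hne, ⟨w₁, -, h₁⟩, ⟨w₂, -, h₂⟩⟩ := exists_two_kSets_through hk hWk
      (fun h => notMem_erase y B (hW h))
    have hall : ∀ (T : KSet v k) (w : Fin v), T.1 = insert y (W.erase w) → T = S := by
      intro T w hT
      by_contra hTS
      have hTB : T.1 ⊆ B := by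
        rw [hT]
        exact insert_subset hyB ((erase_subset _ _).trans (hW.trans (erase_subset _ _)))
      have h := (hB T).1 hTB
      rw [Function.update_of_ne hTS] at h
      have hTA : T.1 ⊆ A := by simpa [G] using h
      exact hyA (hTA (by rw [hT]; exact mem_insert_self _ _))
    exact hne ((hall S₁ w₁ h₁).trans (hall S₂ w₂ h₂).symm)

/-- The clique size that balances the sensitivities at the two kinds of inputs. -/
noncomputable def cliqueSize (k v : ℕ) : ℕ :=
  ⌈(v : ℝ) ^ (((k : ℝ) - 2) / (2 * ((k : ℝ) - 1)))⌉₊ + k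

lemma rpow_cliqueExponent_pow {k : ℕ} (hk : 2 ≤ k) (v : ℕ) :
    ((v : ℝ) ^ (((k : ℝ) - 2) / (2 * ((k : ℝ) - 1)))) ^ (k - 1) =
      (v : ℝ) ^ (((k : ℝ) - 2) / 2) := by
  have hk' : (2 : ℝ) ≤ k := by exact_mod_cast hk
  rw [← Real.rpow_natCast, ← Real.rpow_mul (Nat.cast_nonneg v), Nat.cast_sub (by omega)]
  congr 1
  have : (k : ℝ) - 1 ≠ 0 := by linarith
  push_cast
  field_simp

lemma rpow_le_factorial_mul_choose_cliqueSize {k : ℕ} (hk : 2 ≤ k) (v : ℕ) :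
    (v : ℝ) ^ (((k : ℝ) - 2) / 2) ≤
      ((k - 1).factorial : ℝ) * ((cliqueSize k v).choose (k - 1) : ℝ) := by
  rw [← rpow_cliqueExponent_pow hk]
  have h₁ : (cliqueSize k v + 1 - (k - 1)) ^ (k - 1) ≤
      (k - 1).factorial * (cliqueSize k v).choose (k - 1) := by
    rw [← Nat.descFactorial_eq_factorial_mul_choose]
    exact Nat.pow_sub_le_descFactorial _ _
  have h₂ : (v : ℝ) ^ (((k : ℝ) - 2) / (2 * ((k : ℝ) - 1))) ≤
      ((cliqueSize k v + 1 - (k - 1) : ℕ) : ℝ) := by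
    refine (Nat.le_ceil _).trans ?_
    rw [Nat.cast_le, cliqueSize]
    omega
  refine (pow_le_pow_left₀ (by positivity) h₂ _).trans ?_
  exact_mod_cast h₁

lemma add_one_le_cliqueSize (k : ℕ) {v : ℕ} (hv : 1 ≤ v) : k + 1 ≤ cliqueSize k v := by
  have hv' : (0 : ℝ) < v := by exact_mod_cast hv
  have : 0 < ⌈(v : ℝ) ^ (((k : ℝ) - 2) / (2 * ((k : ℝ) - 1)))⌉₊ :=
    Nat.ceil_pos.2 (by positivity)
  rw [cliqueSize]
  omega

lemma cliqueSize_le {k v : ℕ} :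
    (cliqueSize k v : ℝ) ≤ (v : ℝ) ^ (((k : ℝ) - 2) / (2 * ((k : ℝ) - 1))) + 1 + k := by
  rw [cliqueSize, Nat.cast_add]
  have := Nat.ceil_lt_add_one
    (by positivity : 0 ≤ (v : ℝ) ^ (((k : ℝ) - 2) / (2 * ((k : ℝ) - 1))))
  linarith

lemma rpow_half_sub_one_mul_self {k v : ℕ} (hv : 1 ≤ v) :
    (v : ℝ) ^ (((k : ℝ) - 2) / 2) * v = (v : ℝ) ^ ((k : ℝ) / 2) := by
  have hv' : (0 : ℝ) < v := by exact_mod_cast hv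
  nth_rewrite 2 [← Real.rpow_one (v : ℝ)]
  rw [← Real.rpow_add hv']
  congr 1
  ring

lemma two_mul_cliqueSize_le {k v : ℕ} (hk : 2 ≤ k) (hv : 16 * (k + 1) ^ 2 ≤ v) :
    2 * cliqueSize k v ≤ v := by
  have hk' : (2 : ℝ) ≤ k := by exact_mod_cast hk
  have hv' : 16 * ((k : ℝ) + 1) ^ 2 ≤ v := by exact_mod_cast hv
  have hv1 : (1 : ℝ) ≤ v := by nlinarith
  have hexp : (v : ℝ) ^ (((k : ℝ) - 2) / (2 * ((k : ℝ) - 1))) ≤ √v := by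
    rw [Real.sqrt_eq_rpow]
    refine Real.rpow_le_rpow_of_exponent_le hv1 ?_
    rw [div_le_div_iff₀ (by linarith) (by norm_num)]
    linarith
  have hs : √(v : ℝ) ^ 2 = v := Real.sq_sqrt (by linarith)
  have hs4 : 4 * ((k : ℝ) + 1) ≤ √v := Real.le_sqrt_of_sq_le (by nlinarith)
  have h : (2 * cliqueSize k v : ℝ) ≤ v := by
    have := cliqueSize_le (k := k) (v := v)
    nlinarith
  exact_mod_cast h

lemma sens_le_rpow {k v : ℕ} (hk : 2 ≤ k) (hv : 1 ≤ v) :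
    (sens (hasIsolatedClique v k (cliqueSize k v)) : ℝ) ≤
      ((k : ℝ) + 2) ^ (k - 1) * (v : ℝ) ^ ((k : ℝ) / 2) := by
  have hv' : (1 : ℝ) ≤ v := by exact_mod_cast hv
  have hk' : (2 : ℝ) ≤ k := by exact_mod_cast hk
  have ha := add_one_le_cliqueSize k hv
  obtain ⟨G, -, hG⟩ := exists_mem_eq_sup univ univ_nonempty
    (localSens (hasIsolatedClique v k (cliqueSize k v)))
  rw [sens, hG, ← rpow_half_sub_one_mul_self hv]
  cases hf : hasIsolatedClique v k (cliqueSize k v) G with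
  | true =>
    have h₁ : (localSens (hasIsolatedClique v k (cliqueSize k v)) G : ℝ) ≤
        (cliqueSize k v : ℝ) ^ (k - 1) * v := by
      exact_mod_cast localSens_le_of_eq_true (by omega) hf
    have h₂ : (cliqueSize k v : ℝ) ≤
        ((k : ℝ) + 2) * (v : ℝ) ^ (((k : ℝ) - 2) / (2 * ((k : ℝ) - 1))) := by
      have hone : 1 ≤ (v : ℝ) ^ (((k : ℝ) - 2) / (2 * ((k : ℝ) - 1))) :=
        Real.one_le_rpow hv' (div_nonneg (by linarith) (by linarith))
      have := cliqueSize_le (k := k) (v := v)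
      nlinarith
    have h₃ := pow_le_pow_left₀ (Nat.cast_nonneg _) h₂ (k - 1)
    rw [mul_pow, rpow_cliqueExponent_pow hk] at h₃
    rw [← mul_assoc]
    exact h₁.trans (mul_le_mul_of_nonneg_right h₃ (by linarith))
  | false =>
    have h₁ := localSens_mul_choose_le_of_eq_false hk ha hf
    set N := localSens (hasIsolatedClique v k (cliqueSize k v)) G
    have hfac : (N : ℝ) * (((k - 1).factorial : ℝ) * ((cliqueSize k v).choose (k - 1) : ℝ)) ≤
        (v : ℝ) ^ (k - 1) := by
      have h₂ : N * ((k - 1).factorial * (cliqueSize k v).choose (k - 1)) ≤ v ^ (k - 1) :=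
        calc N * ((k - 1).factorial * (cliqueSize k v).choose (k - 1))
            = (k - 1).factorial * (N * (cliqueSize k v).choose (k - 1)) := by ring
          _ ≤ (k - 1).factorial * v.choose (k - 1) := Nat.mul_le_mul_left _ h₁
          _ = v.descFactorial (k - 1) := (Nat.descFactorial_eq_factorial_mul_choose _ _).symm
          _ ≤ v ^ (k - 1) := Nat.descFactorial_le_pow _ _
      exact_mod_cast h₂
    have hpos : 0 < (v : ℝ) ^ (((k : ℝ) - 2) / 2) := by positivity
    have hpow : (v : ℝ) ^ (k - 1) =
        ((v : ℝ) ^ (((k : ℝ) - 2) / 2) * v) * (v : ℝ) ^ (((k : ℝ) - 2) / 2) := by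
      rw [rpow_half_sub_one_mul_self hv, ← Real.rpow_add (by linarith), ← Real.rpow_natCast,
        Nat.cast_sub (by omega)]
      congr 1
      push_cast
      ring
    have hN : (N : ℝ) ≤ (v : ℝ) ^ (((k : ℝ) - 2) / 2) * v := by
      refine le_of_mul_le_mul_right ?_ hpos
      rw [← hpow]
      exact (mul_le_mul_of_nonneg_left (rpow_le_factorial_mul_choose_cliqueSize hk v)
        (Nat.cast_nonneg _)).trans hfac
    refine hN.trans (le_mul_of_one_le_left (by positivity) ?_)
    exact one_le_pow₀ (by linarith)

lemma rpow_le_sens {k v : ℕ} (hk : 2 ≤ k) (hv : 16 * (k + 1) ^ 2 ≤ v) :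
    1 / (2 * ((k - 1).factorial : ℝ)) * (v : ℝ) ^ ((k : ℝ) / 2) ≤
      (sens (hasIsolatedClique v k (cliqueSize k v)) : ℝ) := by
  have hv1 : 1 ≤ v := by nlinarith
  have hv' : (1 : ℝ) ≤ v := by exact_mod_cast hv1
  have h2a := two_mul_cliqueSize_le hk hv
  have ha := add_one_le_cliqueSize k hv1
  have hs := choose_mul_le_sens hk ha (by omega : cliqueSize k v ≤ v)
  have hs' : ((cliqueSize k v).choose (k - 1) : ℝ) * ((v : ℝ) - cliqueSize k v) ≤
      (sens (hasIsolatedClique v k (cliqueSize k v)) : ℝ) := by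
    rw [← Nat.cast_sub (by omega)]
    exact_mod_cast hs
  refine le_trans ?_ hs'
  have h2a' : 2 * (cliqueSize k v : ℝ) ≤ v := by exact_mod_cast h2a
  have hfac : (0 : ℝ) < (k - 1).factorial := by exact_mod_cast Nat.factorial_pos _
  rw [← rpow_half_sub_one_mul_self hv1]
  calc 1 / (2 * ((k - 1).factorial : ℝ)) * ((v : ℝ) ^ (((k : ℝ) - 2) / 2) * v)
      ≤ 1 / (2 * ((k - 1).factorial : ℝ)) *
          (((k - 1).factorial : ℝ) * ((cliqueSize k v).choose (k - 1) : ℝ) * v) := by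
        gcongr
        exact rpow_le_factorial_mul_choose_cliqueSize hk v
    _ = ((cliqueSize k v).choose (k - 1) : ℝ) * ((v : ℝ) / 2) := by
        field_simp
    _ ≤ ((cliqueSize k v).choose (k - 1) : ℝ) * ((v : ℝ) - cliqueSize k v) := by
        gcongr
        linarith

theorem stmt6 (k : ℕ) (hk : 2 ≤ k) :
    ∃ f : (v : ℕ) → (HGraph v k → Bool),
      (∀ v, IsHypergraphProperty (f v)) ∧
      ∃ c C : ℝ, 0 < c ∧ 0 < C ∧ ∃ v₀ : ℕ, ∀ v : ℕ, v₀ ≤ v →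
        c * (v : ℝ) ^ ((k : ℝ) / 2) ≤ (sens (f v) : ℝ) ∧
        (sens (f v) : ℝ) ≤ C * (v : ℝ) ^ ((k : ℝ) / 2) := by
  refine ⟨fun v => hasIsolatedClique v k (cliqueSize k v),
    fun v => isHypergraphProperty_hasIsolatedClique v k _,
    1 / (2 * ((k - 1).factorial : ℝ)), ((k : ℝ) + 2) ^ (k - 1), by positivity, by positivity,
    16 * (k + 1) ^ 2, fun v hv => ⟨rpow_le_sens hk hv, sens_le_rpow hk ?_⟩⟩
  nlinarith
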